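/- arXiv:2410.15371 — 2 statements merged into one kernel-verified Lean document; each statement's English description precedes it below -/
import Mathlib

section
/- Let α_t, σ_t, α_T, σ_T be positive reals with SNR_T < SNR_t, and let a_t, b_t, c_t² be the bridge coefficients. Then for all real numbers z₀, z_t, z_T, the product of Gaussian density values N(z_T; (α_T/α_t)·z_t, σ_T² − (α_T/α_t)²·σ_t²) · N(z_t; α_t·z₀, σ_t²) equals N(z_T; α_T·z₀, σ_T²) · N(z_t; a_t·z₀ + b_t·z_T, c_t²), where N(x; μ, v) = (2πv)^{-1/2}·exp(−(x−μ)²/(2v)) denotes the one-dimensional Gaussian density with mean μ and variance v evaluated at x. (This identifies the bridge perturbation kernel p_{t,bridge}(z_t | z₀, z_T) obtained by Bayes' rule as the Gaussian N(z_t; a_t z₀ + b_t z_T, c_t²).) -/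
open Real

/-- One-dimensional Gaussian density with mean `μ` and variance `v`, evaluated at `x`. -/
noncomputable def gaussDensity (x μ v : ℝ) : ℝ :=
  (Real.sqrt (2 * Real.pi * v))⁻¹ * Real.exp (-(x - μ) ^ 2 / (2 * v))

/-- The product of the Gaussian densities appearing in the Bayes-rule computation of the
bridge perturbation kernel equals the product of `N(z_T; α_T z₀, σ_T²)` with the Gaussian
bridge kernel `N(z_t; a_t z₀ + b_t z_T, c_t²)`. -/
theorem bridge_perturbation_kernel_gaussian
    (αt σt αT σT : ℝ) (hαt : 0 < αt) (hσt : 0 < σt) (hαT : 0 < αT) (hσT : 0 < σT)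
    (hSNR : αT ^ 2 / σT ^ 2 < αt ^ 2 / σt ^ 2) :
    ∀ z₀ zt zT : ℝ,
      gaussDensity zT ((αT / αt) * zt) (σT ^ 2 - (αT / αt) ^ 2 * σt ^ 2) *
          gaussDensity zt (αt * z₀) (σt ^ 2) =
        gaussDensity zT (αT * z₀) (σT ^ 2) *
          gaussDensity zt
            ((αt * (1 - (αT ^ 2 / σT ^ 2) / (αt ^ 2 / σt ^ 2))) * z₀ +
              (((αT ^ 2 / σT ^ 2) / (αt ^ 2 / σt ^ 2)) * (αt / αT)) * zT)
            (σt ^ 2 * (1 - (αT ^ 2 / σT ^ 2) / (αt ^ 2 / σt ^ 2))) := by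
  intro z₀ zt zT
  obtain ⟨D, hD⟩ : ∃ D, D = αt ^ 2 * σT ^ 2 - αT ^ 2 * σt ^ 2 := ⟨_, rfl⟩
  have hDpos : 0 < D := by
    rw [div_lt_div_iff₀ (by positivity) (by positivity)] at hSNR
    linarith
  have hDne : D ≠ 0 := hDpos.ne'
  have e1 : σT ^ 2 - (αT / αt) ^ 2 * σt ^ 2 = D / αt ^ 2 := by
    rw [hD]; field_simp
  have e2 : 1 - (αT ^ 2 / σT ^ 2) / (αt ^ 2 / σt ^ 2) = D / (αt ^ 2 * σT ^ 2) := by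
    rw [hD]; field_simp
  have e3 : ((αT ^ 2 / σT ^ 2) / (αt ^ 2 / σt ^ 2)) * (αt / αT)
      = αT * σt ^ 2 / (σT ^ 2 * αt) := by
    field_simp
  rw [e1, e2, e3]
  unfold gaussDensity
  rw [mul_mul_mul_comm, mul_mul_mul_comm (√(2 * π * σT ^ 2))⁻¹, ← Real.exp_add, ← Real.exp_add,
    ← mul_inv, ← mul_inv, ← Real.sqrt_mul (by positivity), ← Real.sqrt_mul (by positivity)]
  congr 1
  · congr 2
    field_simp
  · congr 1
    field_simp
    rw [hD]
    ring
end

section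
/- (Parameterization of the denoising bridge score-matching target, Proposition 1, first part.) Let V be a vector space over ℝ. Let α_t, σ_t, α_T, σ_T be positive reals with SNR_T < SNR_t, and let a_t, b_t, c_t² be the bridge coefficients. For any z₀, z_t, z_T ∈ V, setting ε = σ_t⁻¹ • (z_t − α_t • z₀), the identity −(c_t²)⁻¹ • (z_t − a_t • z₀ − b_t • z_T) = −(σ_t)⁻¹ • ε − ((SNR_T/SNR_t) / (σ_t²·(1 − SNR_T/SNR_t))) • (z_t − (α_t/α_T) • z_T) holds. (Hence the Denoising Bridge Score Matching target ∇ log p_{t,bridge}(z_t | z₀, z_T) can be reparameterized as −(1/σ_t)·ε minus an analytically known correction term.) -/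
/-- Parameterization of the denoising bridge score-matching target (Proposition 1, first part):
with `ε = σ_t⁻¹ • (z_t − α_t • z₀)`, the scaled residual
`−(c_t²)⁻¹ • (z_t − a_t • z₀ − b_t • z_T)` equals `−σ_t⁻¹ • ε` minus the analytically known
correction term. -/
theorem bridge_score_parameterization
    {V : Type*} [AddCommGroup V] [Module ℝ V]
    (αt σt αT σT : ℝ) (hαt : 0 < αt) (hσt : 0 < σt) (hαT : 0 < αT) (hσT : 0 < σT)
    (hSNR : αT ^ 2 / σT ^ 2 < αt ^ 2 / σt ^ 2)
    (z₀ zt zT : V) (ε : V) (hε : ε = σt⁻¹ • (zt - αt • z₀)) :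
    -(σt ^ 2 * (1 - (αT ^ 2 / σT ^ 2) / (αt ^ 2 / σt ^ 2)))⁻¹ •
        (zt - (αt * (1 - (αT ^ 2 / σT ^ 2) / (αt ^ 2 / σt ^ 2))) • z₀ -
          (((αT ^ 2 / σT ^ 2) / (αt ^ 2 / σt ^ 2)) * (αt / αT)) • zT) =
      -σt⁻¹ • ε -
        (((αT ^ 2 / σT ^ 2) / (αt ^ 2 / σt ^ 2)) /
            (σt ^ 2 * (1 - (αT ^ 2 / σT ^ 2) / (αt ^ 2 / σt ^ 2)))) •
          (zt - (αt / αT) • zT) := by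
  have hr : (αT ^ 2 / σT ^ 2) / (αt ^ 2 / σt ^ 2) < 1 := by
    rw [div_lt_one (by positivity)]
    exact hSNR
  subst hε
  generalize (αT ^ 2 / σT ^ 2) / (αt ^ 2 / σt ^ 2) = r at hr ⊢
  have h1 : (1 - r) ≠ 0 := by linarith
  have hs : σt ≠ 0 := hσt.ne'
  have hA : αT ≠ 0 := hαT.ne'
  match_scalars
  · field_simp
    ring
  · field_simp
  · field_simp
end
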